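/- arXiv:2212.01175 — 3 statements merged into one kernel-verified Lean document; each statement's English description precedes it below -/
import Mathlib

section
/- Let K be a field and U, V, W be K-vector spaces. For i = 1,…,4 let A^(i) ∈ U, B^(i) ∈ V, Γ^(i) ∈ W be such that A^(1) ⊗ B^(1) ⊗ Γ^(1) + A^(2) ⊗ B^(2) ⊗ Γ^(2) = A^(3) ⊗ B^(3) ⊗ Γ^(3) + A^(4) ⊗ B^(4) ⊗ Γ^(4) in U ⊗ V ⊗ W, and such that the spans of {A^(1), A^(2)}, of {B^(1), B^(2)}, and of {Γ^(1), Γ^(2)} each have dimension 2. Then {A^(1) ⊗ B^(1) ⊗ Γ^(1), A^(2) ⊗ B^(2) ⊗ Γ^(2)} = {A^(3) ⊗ B^(3) ⊗ Γ^(3), A^(4) ⊗ B^(4) ⊗ Γ^(4)} as sets. -/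
open TensorProduct

/-! Write `Tᵢ = Aᵢ ⊗ Bᵢ ⊗ Γᵢ`. Choose functionals `f₁, f₂` on `U`, `g₁, g₂` on `V`, `h₁, h₂` on `W`
dual to the pairs `(A₁, A₂)`, `(B₁, B₂)`, `(Γ₁, Γ₂)`. Contracting the equation with `f₁` and with
`f₂` gives
`B₁ ⊗ Γ₁ = f₁(A₃) B₃ ⊗ Γ₃ + f₁(A₄) B₄ ⊗ Γ₄` and `B₂ ⊗ Γ₂ = f₂(A₃) B₃ ⊗ Γ₃ + f₂(A₄) B₄ ⊗ Γ₄`.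
In the coordinates given by `g` and `h`, these write the `2 × 2` matrix units `E₁₁`
and `E₂₂` as combinations of the same two matrices of rank at most one. Let `D` be the product of the determinants of the coordinates of `(B₃, B₄)` and `(Γ₃, Γ₄)`.
Comparing determinants, `f₁(A₃) f₁(A₄) D = 0`, `f₂(A₃) f₂(A₄) D = 0`, while the sum of the two
matrices is the identity, so `(f₁(A₃) + f₂(A₃)) (f₁(A₄) + f₂(A₄)) D = 1`. Hence `D ≠ 0` and, up to
exchanging the indices `3` and `4`, `f₁(A₄) = f₂(A₃) = 0` (`coord_cases`). Then `B₁ ⊗ Γ₁` is a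
multiple of `B₃ ⊗ Γ₃` and `B₂ ⊗ Γ₂` one of `B₄ ⊗ Γ₄`; contracting the equation with `g₁ ⊗ h₁` makes
`A₁` the inverse multiple of `A₃`, so `T₁ = T₃` (`tmul_eq_of_vanish`), and `T₂ = T₄` follows. -/

/-- A pair spanning a plane admits dual functionals on the whole space. -/
lemma exists_dual_pair {K U : Type*} [Field K] [AddCommGroup U] [Module K U] {x y : U}
    (h : Module.finrank K ↥(Submodule.span K ({x, y} : Set U)) = 2) :
    ∃ f₁ f₂ : U →ₗ[K] K, f₁ x = 1 ∧ f₁ y = 0 ∧ f₂ x = 0 ∧ f₂ y = 1 := by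
  have hli : LinearIndependent K ![x, y] := by
    rw [linearIndependent_iff_card_eq_finrank_span, Set.finrank, Matrix.range_cons_cons_empty, h]
    simp
  obtain ⟨p, hp⟩ := LinearMap.exists_leftInverse_of_injective
    (Fintype.linearCombination K ![x, y])
    (LinearMap.ker_eq_bot.2 (linearIndependent_iff_injective_fintypeLinearCombination.1 hli))
  have hx : p x = Pi.single 0 1 := by
    have := LinearMap.congr_fun hp (Pi.single 0 1)
    simpa [Fintype.linearCombination_apply_single] using this
  have hy : p y = Pi.single 1 1 := by
    have := LinearMap.congr_fun hp (Pi.single 1 1)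
    simpa [Fintype.linearCombination_apply_single] using this
  exact ⟨LinearMap.proj 0 ∘ₗ p, LinearMap.proj 1 ∘ₗ p, by simp [hx], by simp [hy], by simp [hx],
    by simp [hy]⟩

/-- Contraction of the first tensor factor with a functional. -/
noncomputable def tensorContractFst {K U M : Type*} [Field K] [AddCommGroup U] [Module K U]
    [AddCommGroup M] [Module K M] (f : U →ₗ[K] K) : U ⊗[K] M →ₗ[K] M :=
  (TensorProduct.lid K M).toLinearMap ∘ₗ f.rTensor M

@[simp] lemma tensorContractFst_tmul {K U M : Type*} [Field K] [AddCommGroup U] [Module K U]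
    [AddCommGroup M] [Module K M] (f : U →ₗ[K] K) (a : U) (m : M) :
    tensorContractFst f (a ⊗ₜ[K] m) = f a • m := by
  simp [tensorContractFst]

/-- Contraction of the second tensor factor with a functional. -/
noncomputable def tensorContractSnd {K U M : Type*} [Field K] [AddCommGroup U] [Module K U]
    [AddCommGroup M] [Module K M] (φ : M →ₗ[K] K) : U ⊗[K] M →ₗ[K] U :=
  (TensorProduct.rid K U).toLinearMap ∘ₗ φ.lTensor U

@[simp] lemma tensorContractSnd_tmul {K U M : Type*} [Field K] [AddCommGroup U] [Module K U]
    [AddCommGroup M] [Module K M] (φ : M →ₗ[K] K) (a : U) (m : M) :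
    tensorContractSnd φ (a ⊗ₜ[K] m) = φ m • a := by
  simp [tensorContractSnd]

/-- The functional `g ⊗ h` on a tensor product. -/
noncomputable def tensorFunctional {K V W : Type*} [Field K] [AddCommGroup V] [Module K V]
    [AddCommGroup W] [Module K W] (g : V →ₗ[K] K) (h : W →ₗ[K] K) : V ⊗[K] W →ₗ[K] K :=
  h ∘ₗ tensorContractFst g

@[simp] lemma tensorFunctional_tmul {K V W : Type*} [Field K] [AddCommGroup V] [Module K V]
    [AddCommGroup W] [Module K W] (g : V →ₗ[K] K) (h : W →ₗ[K] K) (v : V) (w : W) :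
    tensorFunctional g h (v ⊗ₜ[K] w) = g v * h w := by
  simp [tensorFunctional]

/-- If `a₃ b₃c₃ᵀ + a₄ b₄c₄ᵀ = E₁₁` and `a₃' b₃c₃ᵀ + a₄' b₄c₄ᵀ = E₂₂` as `2 × 2` matrices, where in
these products `bᵢ` and `cᵢ` stand for the columns `(bᵢ, bᵢ')` and `(cᵢ, cᵢ')`, then the coefficient matrix with rows
`(a₃, a₄)` and `(a₃', a₄')` is diagonal or antidiagonal. The determinant of `s b₃c₃ᵀ + t b₄c₄ᵀ` is
`s t D`, where `D` is independent of `s` and `t`. -/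
lemma coord_cases {K : Type*} [Field K] {a₃ a₄ a₃' a₄' b₃ b₄ b₃' b₄' c₃ c₄ c₃' c₄' : K}
    (e₁₁ : a₃ * (b₃ * c₃) + a₄ * (b₄ * c₄) = 1)
    (e₁₂ : a₃ * (b₃ * c₃') + a₄ * (b₄ * c₄') = 0)
    (e₂₁ : a₃ * (b₃' * c₃) + a₄ * (b₄' * c₄) = 0)
    (e₂₂ : a₃ * (b₃' * c₃') + a₄ * (b₄' * c₄') = 0)
    (e₁₁' : a₃' * (b₃ * c₃) + a₄' * (b₄ * c₄) = 0)
    (e₁₂' : a₃' * (b₃ * c₃') + a₄' * (b₄ * c₄') = 0)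
    (e₂₁' : a₃' * (b₃' * c₃) + a₄' * (b₄' * c₄) = 0)
    (e₂₂' : a₃' * (b₃' * c₃') + a₄' * (b₄' * c₄') = 1) :
    (a₄ = 0 ∧ a₃' = 0) ∨ (a₃ = 0 ∧ a₄' = 0) := by
  set D := (b₃ * b₄' - b₄ * b₃') * (c₃ * c₄' - c₄ * c₃') with hD
  have det (s t : K) : (s * (b₃ * c₃) + t * (b₄ * c₄)) * (s * (b₃' * c₃') + t * (b₄' * c₄'))
      - (s * (b₃ * c₃') + t * (b₄ * c₄')) * (s * (b₃' * c₃) + t * (b₄' * c₄)) = s * t * D := by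
    rw [hD]; ring
  have d₁ : a₃ * a₄ * D = 0 := by rw [← det, e₁₁, e₁₂, e₂₁, e₂₂]; ring
  have d₂ : a₃' * a₄' * D = 0 := by rw [← det, e₁₁', e₁₂', e₂₁', e₂₂']; ring
  have d₃ : (a₃ + a₃') * (a₄ + a₄') * D = 1 := by
    have s₁₁ : (a₃ + a₃') * (b₃ * c₃) + (a₄ + a₄') * (b₄ * c₄) = 1 := by
      linear_combination e₁₁ + e₁₁'
    have s₁₂ : (a₃ + a₃') * (b₃ * c₃') + (a₄ + a₄') * (b₄ * c₄') = 0 := by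
      linear_combination e₁₂ + e₁₂'
    have s₂₂ : (a₃ + a₃') * (b₃' * c₃') + (a₄ + a₄') * (b₄' * c₄') = 1 := by
      linear_combination e₂₂ + e₂₂'
    rw [← det, s₁₁, s₁₂, s₂₂]; ring
  clear_value D
  have hD0 : D ≠ 0 := by rintro rfl; simp at d₃
  have z₁ : a₃ = 0 ∨ a₄ = 0 := by simpa [hD0] using d₁
  have z₂ : a₃' = 0 ∨ a₄' = 0 := by simpa [hD0] using d₂
  rcases z₁ with rfl | rfl <;> rcases z₂ with rfl | rfl <;> simp_all

/-- If `m₁` is a multiple of `m₃`, `m₂ ≠ 0` a multiple of `m₄`, and `φ` separates `m₁` from `m₂`,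
then the first summands on both sides agree: contracting with `φ` kills `m₂` and `m₄`, so `A₁` is a
multiple of `A₃`, by the inverse factor. It is used with `M = V ⊗ W` and `φ = g₁ ⊗ h₁`. -/
lemma tmul_eq_of_vanish {K U M : Type*} [Field K] [AddCommGroup U] [Module K U]
    [AddCommGroup M] [Module K M] {A₁ A₂ A₃ A₄ : U} {m₁ m₂ m₃ m₄ : M}
    (heq : A₁ ⊗ₜ[K] m₁ + A₂ ⊗ₜ[K] m₂ = A₃ ⊗ₜ[K] m₃ + A₄ ⊗ₜ[K] m₄)
    (φ : M →ₗ[K] K) (hφ₁ : φ m₁ = 1) (hφ₂ : φ m₂ = 0) {s t : K}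
    (h₁ : m₁ = s • m₃) (h₂ : m₂ = t • m₄) (hm₂ : m₂ ≠ 0) :
    A₁ ⊗ₜ[K] m₁ = A₃ ⊗ₜ[K] m₃ := by
  have ht : t ≠ 0 := by rintro rfl; simp [h₂] at hm₂
  have hφ₄ : φ m₄ = 0 := by simpa [h₂, ht] using hφ₂
  have hA : A₁ = φ m₃ • A₃ := by
    simpa [hφ₁, hφ₂, hφ₄] using congrArg (tensorContractSnd φ) heq
  have hs : φ m₃ * s = 1 := by simpa [h₁, mul_comm] using hφ₁
  rw [h₁, hA, TensorProduct.smul_tmul, smul_smul, hs, one_smul]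

/-- **Lemma 1.** If `A₁⊗B₁⊗Γ₁ + A₂⊗B₂⊗Γ₂ = A₃⊗B₃⊗Γ₃ + A₄⊗B₄⊗Γ₄` and the spans of
`{A₁, A₂}`, `{B₁, B₂}` and `{Γ₁, Γ₂}` are all two-dimensional, then the two sides agree
as sets of elementary tensors. -/
theorem stmt1 (K U V W : Type*) [Field K]
    [AddCommGroup U] [Module K U] [AddCommGroup V] [Module K V]
    [AddCommGroup W] [Module K W]
    (A₁ A₂ A₃ A₄ : U) (B₁ B₂ B₃ B₄ : V) (Γ₁ Γ₂ Γ₃ Γ₄ : W)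
    (heq : A₁ ⊗ₜ[K] (B₁ ⊗ₜ[K] Γ₁) + A₂ ⊗ₜ[K] (B₂ ⊗ₜ[K] Γ₂)
         = A₃ ⊗ₜ[K] (B₃ ⊗ₜ[K] Γ₃) + A₄ ⊗ₜ[K] (B₄ ⊗ₜ[K] Γ₄))
    (hA : Module.finrank K ↥(Submodule.span K ({A₁, A₂} : Set U)) = 2)
    (hB : Module.finrank K ↥(Submodule.span K ({B₁, B₂} : Set V)) = 2)
    (hΓ : Module.finrank K ↥(Submodule.span K ({Γ₁, Γ₂} : Set W)) = 2) :
    ({A₁ ⊗ₜ[K] (B₁ ⊗ₜ[K] Γ₁), A₂ ⊗ₜ[K] (B₂ ⊗ₜ[K] Γ₂)} : Set (U ⊗[K] (V ⊗[K] W)))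
      = {A₃ ⊗ₜ[K] (B₃ ⊗ₜ[K] Γ₃), A₄ ⊗ₜ[K] (B₄ ⊗ₜ[K] Γ₄)} := by
  obtain ⟨f₁, f₂, f11, f12, f21, f22⟩ := exists_dual_pair hA
  obtain ⟨g₁, g₂, g11, g12, g21, g22⟩ := exists_dual_pair hB
  obtain ⟨h₁, h₂, h11, h12, h21, h22⟩ := exists_dual_pair hΓ
  have E₁ : B₁ ⊗ₜ[K] Γ₁ = f₁ A₃ • (B₃ ⊗ₜ[K] Γ₃) + f₁ A₄ • (B₄ ⊗ₜ[K] Γ₄) := by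
    simpa [f11, f12] using congrArg (tensorContractFst f₁) heq
  have E₂ : B₂ ⊗ₜ[K] Γ₂ = f₂ A₃ • (B₃ ⊗ₜ[K] Γ₃) + f₂ A₄ • (B₄ ⊗ₜ[K] Γ₄) := by
    simpa [f21, f22] using congrArg (tensorContractFst f₂) heq
  have C₁ (g : V →ₗ[K] K) (h : W →ₗ[K] K) :
      f₁ A₃ * (g B₃ * h Γ₃) + f₁ A₄ * (g B₄ * h Γ₄) = g B₁ * h Γ₁ := by
    simpa using (congrArg (tensorFunctional g h) E₁).symm
  have C₂ (g : V →ₗ[K] K) (h : W →ₗ[K] K) :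
      f₂ A₃ * (g B₃ * h Γ₃) + f₂ A₄ * (g B₄ * h Γ₄) = g B₂ * h Γ₂ := by
    simpa using (congrArg (tensorFunctional g h) E₂).symm
  have hφ₁ : tensorFunctional g₁ h₁ (B₁ ⊗ₜ[K] Γ₁) = 1 := by simp [g11, h11]
  have hφ₂ : tensorFunctional g₁ h₁ (B₂ ⊗ₜ[K] Γ₂) = 0 := by simp [g12]
  have hm₂ : B₂ ⊗ₜ[K] Γ₂ ≠ 0 := by
    intro h0
    simpa [g22, h22] using congrArg (tensorFunctional g₂ h₂) h0
  have hcases : (f₁ A₄ = 0 ∧ f₂ A₃ = 0) ∨ (f₁ A₃ = 0 ∧ f₂ A₄ = 0) := by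
    apply coord_cases ((C₁ g₁ h₁).trans _) ((C₁ g₁ h₂).trans _) ((C₁ g₂ h₁).trans _)
      ((C₁ g₂ h₂).trans _) ((C₂ g₁ h₁).trans _) ((C₂ g₁ h₂).trans _) ((C₂ g₂ h₁).trans _)
      ((C₂ g₂ h₂).trans _) <;> simp [*]
  rcases hcases with ⟨z, z'⟩ | ⟨z, z'⟩
  · rw [z, zero_smul, add_zero] at E₁
    rw [z', zero_smul, zero_add] at E₂
    have T := tmul_eq_of_vanish heq _ hφ₁ hφ₂ E₁ E₂ hm₂
    rw [T] at heq ⊢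
    rw [add_left_cancel heq]
  · rw [z, zero_smul, zero_add] at E₁
    rw [z', zero_smul, add_zero] at E₂
    have heq' := heq.trans (add_comm _ _)
    have T := tmul_eq_of_vanish heq' _ hφ₁ hφ₂ E₁ E₂ hm₂
    rw [T] at heq' ⊢
    rw [add_left_cancel heq', Set.pair_comm]
end

section
/- Let K be a field and U, V, W be K-vector spaces. For i = 1,…,4 let A^(i) ∈ U, B^(i) ∈ V, Γ^(i) ∈ W all be nonzero, and suppose that A^(1) ⊗ B^(1) ⊗ Γ^(1) + A^(2) ⊗ B^(2) ⊗ Γ^(2) = A^(3) ⊗ B^(3) ⊗ Γ^(3) + A^(4) ⊗ B^(4) ⊗ Γ^(4) in U ⊗ V ⊗ W, that the spans of {B^(1), B^(2)} and of {Γ^(1), Γ^(2)} each have dimension 2, and that {A^(1) ⊗ B^(1) ⊗ Γ^(1), A^(2) ⊗ B^(2) ⊗ Γ^(2)} ≠ {A^(3) ⊗ B^(3) ⊗ Γ^(3), A^(4) ⊗ B^(4) ⊗ Γ^(4)} as sets. Then: (1) the span of {A^(1), A^(2), A^(3), A^(4)} has dimension 1; (2) the span of {B^(1), B^(2)} equals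 the span of {B^(3), B^(4)}; and (3) the span of {Γ^(1), Γ^(2)} equals the span of {Γ^(3), Γ^(4)}. -/
/-!
Contracting the first factor with a functional `f` on `U` turns the tensor identity into the family
of identities `f A₁ • B₁⊗Γ₁ + f A₂ • B₂⊗Γ₂ = f A₃ • B₃⊗Γ₃ + f A₄ • B₄⊗Γ₄` between tensors in
`V ⊗ W`, that is, matrices. A left side with both coefficients nonzero has rank two, so contracting
once more in `W` or `V` forces `⟨B₁, B₂⟩ = ⟨B₃, B₄⟩` and `⟨Γ₁, Γ₂⟩ = ⟨Γ₃, Γ₄⟩`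
(`span_pair_eq_and_span_pair_eq`). Such an `f` always exists, so (2) and (3) hold in every case, and
all four pairs of `B`s and `Γ`s are linearly independent.

* If `A₁` and `A₂` are independent, dual functionals write each of the rank-one matrices `B₁⊗Γ₁`,
  `B₂⊗Γ₂` as a combination of `B₃⊗Γ₃` and `B₄⊗Γ₄`. A combination with two nonzero coefficients has
  rank two (`eq_zero_or_eq_zero_of_tmul_eq`), so the matrices on the two sides are proportional in
  pairs. Comparing coefficients in `U` then shows that the two sides have the same terms
  (`pair_eq_of_tmul_eq_smul`), which is excluded.
* If `A₂` is a multiple of `A₁`, a functional vanishing at `A₁` kills the left side, and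
  independence of `B₃⊗Γ₃` and `B₄⊗Γ₄` makes it vanish at `A₃` and `A₄`. Hence all `Aᵢ` lie in
  `⟨A₁⟩`.
-/

open TensorProduct

section Helpers

variable {K U V W : Type*} [Field K] [AddCommGroup U] [Module K U]
  [AddCommGroup V] [Module K V] [AddCommGroup W] [Module K W]

lemma linearIndependent_pair_of_finrank {x y : V}
    (h : Module.finrank K ↥(Submodule.span K ({x, y} : Set V)) = 2) :
    LinearIndependent K ![x, y] := by
  rw [linearIndependent_iff_card_eq_finrank_span, Set.finrank, Matrix.range_cons_cons_empty, h,
    Fintype.card_fin]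

lemma finrank_span_pair {x y : V} (h : LinearIndependent K ![x, y]) :
    Module.finrank K ↥(Submodule.span K ({x, y} : Set V)) = 2 := by
  rw [linearIndependent_iff_card_eq_finrank_span, Set.finrank, Matrix.range_cons_cons_empty,
    Fintype.card_fin] at h
  exact h.symm

lemma linearIndependent_pair_swap {x y : V} (h : LinearIndependent K ![x, y]) :
    LinearIndependent K ![y, x] := by
  apply linearIndependent_pair_of_finrank
  rw [Set.pair_comm]
  exact finrank_span_pair h

lemma exists_functional_of_notMem_span {x y : V} (h : x ∉ Submodule.span K ({y} : Set V)) :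
    ∃ f : V →ₗ[K] K, f x = 1 ∧ f y = 0 := by
  obtain ⟨f, hf, hle⟩ := Submodule.exists_le_ker_of_notMem h
  refine ⟨(f x)⁻¹ • f, by simp [hf], ?_⟩
  have : f y = 0 := hle (Submodule.mem_span_singleton_self y)
  simp [this]

lemma exists_dual_pair_s3 {x y : V} (h : LinearIndependent K ![x, y]) :
    ∃ f : V →ₗ[K] K, f x = 1 ∧ f y = 0 := by
  apply exists_functional_of_notMem_span
  intro hx
  obtain ⟨c, hc⟩ := Submodule.mem_span_singleton.1 hx
  have := (LinearIndependent.pair_iff.1 h) 1 (-c) (by simp [hc])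
  exact one_ne_zero this.1

/-- Contraction of the left tensor factor with a functional. -/
def contractFst (W : Type*) [AddCommGroup W] [Module K W] (f : V →ₗ[K] K) : V ⊗[K] W →ₗ[K] W :=
  (TensorProduct.lid K W).toLinearMap ∘ₗ LinearMap.rTensor W f

@[simp] lemma contractFst_tmul (f : V →ₗ[K] K) (v : V) (w : W) :
    contractFst W f (v ⊗ₜ[K] w) = f v • w := by
  simp [contractFst]

lemma eq_zero_of_smul_tmul_add {B₁ B₂ : V} {Γ₁ Γ₂ : W} {p q : K}
    (hB : LinearIndependent K ![B₁, B₂]) (hΓ₁ : Γ₁ ≠ 0) (hΓ₂ : Γ₂ ≠ 0)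
    (h : p • (B₁ ⊗ₜ[K] Γ₁) + q • (B₂ ⊗ₜ[K] Γ₂) = 0) : p = 0 ∧ q = 0 := by
  obtain ⟨f, hf1, hf2⟩ := exists_dual_pair_s3 hB
  obtain ⟨g, hg2, hg1⟩ := exists_dual_pair_s3 (linearIndependent_pair_swap hB)
  have e1 := congrArg (contractFst W f) h
  have e2 := congrArg (contractFst W g) h
  simp [hf1, hf2, hΓ₁] at e1
  simp [hg1, hg2, hΓ₂] at e2
  exact ⟨e1, e2⟩

/-- The row space of a rank-two matrix is spanned by the row vectors of any two-term
decomposition. -/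
lemma span_pair_eq_right {B₁ B₂ B₃ B₄ : V} {Γ₁ Γ₂ Γ₃ Γ₄ : W} {s t p q : K}
    (hB : LinearIndependent K ![B₁, B₂]) (hΓ : LinearIndependent K ![Γ₁, Γ₂])
    (hs : s ≠ 0) (ht : t ≠ 0)
    (h : s • (B₁ ⊗ₜ[K] Γ₁) + t • (B₂ ⊗ₜ[K] Γ₂) = p • (B₃ ⊗ₜ[K] Γ₃) + q • (B₄ ⊗ₜ[K] Γ₄)) :
    Submodule.span K ({Γ₁, Γ₂} : Set W) = Submodule.span K ({Γ₃, Γ₄} : Set W) := by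
  obtain ⟨f, hf1, hf2⟩ := exists_dual_pair_s3 hB
  obtain ⟨g, hg2, hg1⟩ := exists_dual_pair_s3 (linearIndependent_pair_swap hB)
  have e1 := congrArg (contractFst W f) h
  have e2 := congrArg (contractFst W g) h
  simp [hf1, hf2] at e1
  simp [hg1, hg2] at e2
  have key : ∀ {r x y : K} {v : W}, r ≠ 0 → r • v = p • x • Γ₃ + q • y • Γ₄ →
      v ∈ Submodule.span K ({Γ₃, Γ₄} : Set W) := by
    intro r x y v hr hv
    rw [← Submodule.smul_mem_iff _ hr, hv, Submodule.mem_span_pair]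
    exact ⟨p * x, q * y, by simp [mul_smul]⟩
  have hle : Submodule.span K ({Γ₁, Γ₂} : Set W) ≤ Submodule.span K ({Γ₃, Γ₄} : Set W) := by
    rw [Submodule.span_le]
    rintro v (rfl | rfl)
    · exact key hs e1
    · exact key ht e2
  have : FiniteDimensional K ↥(Submodule.span K ({Γ₃, Γ₄} : Set W)) :=
    FiniteDimensional.span_of_finite K (Set.toFinite _)
  apply Submodule.eq_of_le_of_finrank_le hle
  rw [finrank_span_pair hΓ]
  classical
  have hc := finrank_span_finset_le_card (R := K) ({Γ₃, Γ₄} : Finset W)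
  simp only [Finset.coe_insert, Finset.coe_singleton] at hc
  exact hc.trans Finset.card_le_two

/-- Both the column space and the row space of a rank-two matrix can be read off from any two-term
decomposition. -/
lemma span_pair_eq_and_span_pair_eq {B₁ B₂ B₃ B₄ : V} {Γ₁ Γ₂ Γ₃ Γ₄ : W} {s t p q : K}
    (hB : LinearIndependent K ![B₁, B₂]) (hΓ : LinearIndependent K ![Γ₁, Γ₂])
    (hs : s ≠ 0) (ht : t ≠ 0)
    (h : s • (B₁ ⊗ₜ[K] Γ₁) + t • (B₂ ⊗ₜ[K] Γ₂) = p • (B₃ ⊗ₜ[K] Γ₃) + q • (B₄ ⊗ₜ[K] Γ₄)) :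
    Submodule.span K ({B₁, B₂} : Set V) = Submodule.span K ({B₃, B₄} : Set V) ∧
    Submodule.span K ({Γ₁, Γ₂} : Set W) = Submodule.span K ({Γ₃, Γ₄} : Set W) := by
  refine ⟨?_, span_pair_eq_right hB hΓ hs ht h⟩
  have h' := congrArg (TensorProduct.comm K V W) h
  simp only [map_add, map_smul, TensorProduct.comm_tmul] at h'
  exact span_pair_eq_right hΓ hB hs ht h'

/-- A combination of `B₃ ⊗ Γ₃` and `B₄ ⊗ Γ₄` with two nonzero coefficients has rank two, hence is
not an elementary tensor. -/
lemma eq_zero_or_eq_zero_of_tmul_eq {B B₃ B₄ : V} {Γ Γ₃ Γ₄ : W} {p q : K}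
    (hB : LinearIndependent K ![B₃, B₄]) (hΓ : LinearIndependent K ![Γ₃, Γ₄])
    (h : B ⊗ₜ[K] Γ = p • (B₃ ⊗ₜ[K] Γ₃) + q • (B₄ ⊗ₜ[K] Γ₄)) : p = 0 ∨ q = 0 := by
  obtain ⟨f, hf3, hf4⟩ := exists_dual_pair_s3 hB
  obtain ⟨g, hg4, hg3⟩ := exists_dual_pair_s3 (linearIndependent_pair_swap hB)
  have e1 := congrArg (contractFst W f) h
  have e2 := congrArg (contractFst W g) h
  simp [hf3, hf4] at e1
  simp [hg3, hg4] at e2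
  -- `p • Γ₃` and `q • Γ₄` are both multiples of `Γ`.
  have h0 : (g B * p) • Γ₃ + (-(f B * q)) • Γ₄ = 0 := by
    rw [neg_smul, mul_smul, mul_smul, ← e1, ← e2, smul_comm, add_neg_cancel]
  have h1 := (LinearIndependent.pair_iff.1 hΓ _ _ h0).1
  rcases mul_eq_zero.1 h1 with hg | hp
  · right
    have hΓ₄ : Γ₄ ≠ 0 := hΓ.ne_zero 1
    rw [hg, zero_smul] at e2
    exact (smul_eq_zero.1 e2.symm).resolve_right hΓ₄
  · exact Or.inl hp

/-- If `B₁ ⊗ Γ₁` is a multiple of `B₃ ⊗ Γ₃` and `B₂ ⊗ Γ₂` is a combination of `B₃ ⊗ Γ₃` and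
`B₄ ⊗ Γ₄`, then the two sides of the identity agree term by term. -/
lemma pair_eq_of_tmul_eq_smul {A₁ A₂ A₃ A₄ : U} {B₁ B₂ B₃ B₄ : V} {Γ₁ Γ₂ Γ₃ Γ₄ : W} {a c d : K}
    (heq : A₁ ⊗ₜ[K] (B₁ ⊗ₜ[K] Γ₁) + A₂ ⊗ₜ[K] (B₂ ⊗ₜ[K] Γ₂)
         = A₃ ⊗ₜ[K] (B₃ ⊗ₜ[K] Γ₃) + A₄ ⊗ₜ[K] (B₄ ⊗ₜ[K] Γ₄))
    (hB : LinearIndependent K ![B₁, B₂]) (hΓ : LinearIndependent K ![Γ₁, Γ₂])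
    (hB' : LinearIndependent K ![B₃, B₄]) (hΓ' : LinearIndependent K ![Γ₃, Γ₄])
    (h1 : B₁ ⊗ₜ[K] Γ₁ = a • (B₃ ⊗ₜ[K] Γ₃))
    (h2 : B₂ ⊗ₜ[K] Γ₂ = c • (B₃ ⊗ₜ[K] Γ₃) + d • (B₄ ⊗ₜ[K] Γ₄)) :
    A₁ ⊗ₜ[K] (B₁ ⊗ₜ[K] Γ₁) = A₃ ⊗ₜ[K] (B₃ ⊗ₜ[K] Γ₃) ∧
    A₂ ⊗ₜ[K] (B₂ ⊗ₜ[K] Γ₂) = A₄ ⊗ₜ[K] (B₄ ⊗ₜ[K] Γ₄) := by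
  have hΓ₁ : Γ₁ ≠ 0 := hΓ.ne_zero 0
  have hΓ₂ : Γ₂ ≠ 0 := hΓ.ne_zero 1
  have hΓ₃ : Γ₃ ≠ 0 := hΓ'.ne_zero 0
  have hΓ₄ : Γ₄ ≠ 0 := hΓ'.ne_zero 1
  have hc : c = 0 := by
    rcases eq_zero_or_eq_zero_of_tmul_eq hB' hΓ' h2 with hc | hd
    · exact hc
    · have h3 : c • (B₁ ⊗ₜ[K] Γ₁) + (-a) • (B₂ ⊗ₜ[K] Γ₂) = 0 := by
        rw [h1, h2, hd, zero_smul, add_zero, neg_smul, smul_comm, add_neg_cancel]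
      exact (eq_zero_of_smul_tmul_add hB hΓ₁ hΓ₂ h3).1
  rw [hc, zero_smul, zero_add] at h2
  have hf : ∀ f : U →ₗ[K] K, f (a • A₁ - A₃) = 0 ∧ f (d • A₂ - A₄) = 0 := by
    intro f
    have e := congrArg (contractFst (V ⊗[K] W) f) heq
    simp only [map_add, contractFst_tmul, h1, h2] at e
    refine eq_zero_of_smul_tmul_add hB' hΓ₃ hΓ₄ ?_
    simp only [map_sub, map_smul, smul_eq_mul]
    rw [← sub_eq_zero] at e
    rw [← e]
    module
  have e3 := sub_eq_zero.1 ((Module.forall_dual_apply_eq_zero_iff K _).1 fun f => (hf f).1)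
  have e4 := sub_eq_zero.1 ((Module.forall_dual_apply_eq_zero_iff K _).1 fun f => (hf f).2)
  rw [h1, h2, ← e3, ← e4]
  simp [TensorProduct.smul_tmul]

end Helpers

/-- **Theorem (completeness).** Suppose all `Aᵢ, Bᵢ, Γᵢ` are nonzero,
`A₁⊗B₁⊗Γ₁ + A₂⊗B₂⊗Γ₂ = A₃⊗B₃⊗Γ₃ + A₄⊗B₄⊗Γ₄`, the spans of `{B₁, B₂}` and
`{Γ₁, Γ₂}` are two-dimensional, and the two sides differ as sets of elementary
tensors. Then `⟨A₁, A₂, A₃, A₄⟩` is one-dimensional, `⟨B₁, B₂⟩ = ⟨B₃, B₄⟩`, and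
`⟨Γ₁, Γ₂⟩ = ⟨Γ₃, Γ₄⟩`. -/
theorem stmt3 (K U V W : Type*) [Field K]
    [AddCommGroup U] [Module K U] [AddCommGroup V] [Module K V]
    [AddCommGroup W] [Module K W]
    (A₁ A₂ A₃ A₄ : U) (B₁ B₂ B₃ B₄ : V) (Γ₁ Γ₂ Γ₃ Γ₄ : W)
    (hA₁ : A₁ ≠ 0) (hA₂ : A₂ ≠ 0) (hA₃ : A₃ ≠ 0) (hA₄ : A₄ ≠ 0)
    (hB₁ : B₁ ≠ 0) (hB₂ : B₂ ≠ 0) (hB₃ : B₃ ≠ 0) (hB₄ : B₄ ≠ 0)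
    (hΓ₁ : Γ₁ ≠ 0) (hΓ₂ : Γ₂ ≠ 0) (hΓ₃ : Γ₃ ≠ 0) (hΓ₄ : Γ₄ ≠ 0)
    (heq : A₁ ⊗ₜ[K] (B₁ ⊗ₜ[K] Γ₁) + A₂ ⊗ₜ[K] (B₂ ⊗ₜ[K] Γ₂)
         = A₃ ⊗ₜ[K] (B₃ ⊗ₜ[K] Γ₃) + A₄ ⊗ₜ[K] (B₄ ⊗ₜ[K] Γ₄))
    (hB : Module.finrank K ↥(Submodule.span K ({B₁, B₂} : Set V)) = 2)
    (hΓ : Module.finrank K ↥(Submodule.span K ({Γ₁, Γ₂} : Set W)) = 2)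
    (hne : ({A₁ ⊗ₜ[K] (B₁ ⊗ₜ[K] Γ₁), A₂ ⊗ₜ[K] (B₂ ⊗ₜ[K] Γ₂)} : Set (U ⊗[K] (V ⊗[K] W)))
         ≠ {A₃ ⊗ₜ[K] (B₃ ⊗ₜ[K] Γ₃), A₄ ⊗ₜ[K] (B₄ ⊗ₜ[K] Γ₄)}) :
    Module.finrank K ↥(Submodule.span K ({A₁, A₂, A₃, A₄} : Set U)) = 1 ∧
    Submodule.span K ({B₁, B₂} : Set V) = Submodule.span K ({B₃, B₄} : Set V) ∧
    Submodule.span K ({Γ₁, Γ₂} : Set W) = Submodule.span K ({Γ₃, Γ₄} : Set W) := by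
  have hB' := linearIndependent_pair_of_finrank hB
  have hΓ' := linearIndependent_pair_of_finrank hΓ
  have hcon : ∀ f : U →ₗ[K] K, f A₁ • (B₁ ⊗ₜ[K] Γ₁) + f A₂ • (B₂ ⊗ₜ[K] Γ₂)
      = f A₃ • (B₃ ⊗ₜ[K] Γ₃) + f A₄ • (B₄ ⊗ₜ[K] Γ₄) := by
    intro f
    simpa only [map_add, contractFst_tmul] using congrArg (contractFst (V ⊗[K] W) f) heq
  have hex : ∃ f : U →ₗ[K] K, f A₁ ≠ 0 ∧ f A₂ ≠ 0 := by
    obtain ⟨f, hf⟩ := Module.Projective.exists_dual_ne_zero K hA₁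
    obtain ⟨g, hg⟩ := Module.Projective.exists_dual_ne_zero K hA₂
    by_cases hf2 : f A₂ = 0
    · by_cases hg1 : g A₁ = 0
      · exact ⟨f + g, by simpa [hg1] using hf, by simpa [hf2] using hg⟩
      · exact ⟨g, hg1, hg⟩
    · exact ⟨f, hf, hf2⟩
  obtain ⟨f, hf1, hf2⟩ := hex
  obtain ⟨hBs, hΓs⟩ := span_pair_eq_and_span_pair_eq hB' hΓ' hf1 hf2 (hcon f)
  have hB'' := linearIndependent_pair_of_finrank (hBs ▸ hB)
  have hΓ'' := linearIndependent_pair_of_finrank (hΓs ▸ hΓ)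
  refine ⟨?_, hBs, hΓs⟩
  by_cases hA : LinearIndependent K ![A₁, A₂]
  · exfalso
    apply hne
    obtain ⟨g, hg1, hg2⟩ := exists_dual_pair_s3 hA
    obtain ⟨k, hk2, hk1⟩ := exists_dual_pair_s3 (linearIndependent_pair_swap hA)
    have eg := hcon g
    have ek := hcon k
    rw [hg1, hg2, one_smul, zero_smul, add_zero] at eg
    rw [hk1, hk2, one_smul, zero_smul, zero_add] at ek
    rcases eq_zero_or_eq_zero_of_tmul_eq hB'' hΓ'' eg with h | h
    · rw [h, zero_smul, zero_add] at eg
      rw [add_comm] at ek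
      obtain ⟨e1, e2⟩ := pair_eq_of_tmul_eq_smul (heq.trans (add_comm _ _)) hB' hΓ'
        (linearIndependent_pair_swap hB'') (linearIndependent_pair_swap hΓ'') eg ek
      rw [e1, e2, Set.pair_comm]
    · rw [h, zero_smul, add_zero] at eg
      obtain ⟨e1, e2⟩ := pair_eq_of_tmul_eq_smul heq hB' hΓ' hB'' hΓ'' eg ek
      rw [e1, e2]
  · have h2 : A₂ ∈ Submodule.span K ({A₁} : Set U) := by
      rw [LinearIndependent.pair_iff' hA₁] at hA
      push Not at hA
      exact Submodule.mem_span_singleton.2 hA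
    have hzero : ∀ g : U →ₗ[K] K, g A₁ = 0 → g A₃ = 0 ∧ g A₄ = 0 := by
      intro g hg
      obtain ⟨c, rfl⟩ := Submodule.mem_span_singleton.1 h2
      have e := hcon g
      simp only [map_smul, hg, smul_zero, zero_smul, add_zero] at e
      exact eq_zero_of_smul_tmul_add hB'' hΓ₃ hΓ₄ e.symm
    have h3 : A₃ ∈ Submodule.span K ({A₁} : Set U) := by
      by_contra h
      obtain ⟨g, hg, hg1⟩ := exists_functional_of_notMem_span h
      exact one_ne_zero (hg.symm.trans (hzero g hg1).1)
    have h4 : A₄ ∈ Submodule.span K ({A₁} : Set U) := by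
      by_contra h
      obtain ⟨g, hg, hg1⟩ := exists_functional_of_notMem_span h
      exact one_ne_zero (hg.symm.trans (hzero g hg1).2)
    have hs : Submodule.span K ({A₁, A₂, A₃, A₄} : Set U) = Submodule.span K ({A₁} : Set U) := by
      apply le_antisymm
      · rw [Submodule.span_le]
        rintro v (rfl | rfl | rfl | rfl)
        exacts [Submodule.mem_span_singleton_self _, h2, h3, h4]
      · exact Submodule.span_mono (by simp)
    rw [hs, finrank_span_singleton hA₁]
end

section
/- Let K be a field and let α_1, α_2, α'_1, α'_2, β_1, β_2, β'_1, β'_2, γ_1, γ_2, γ'_1, γ'_2 ∈ K satisfy the eight equations: α_1β_1γ_1 + α'_1β'_1γ'_1 = 1, α_1β_1γ_2 + α'_1β'_1γ'_2 = 0, α_1β_2γ_1 + α'_1β'_2γ'_1 = 0, α_1β_2γ_2 + α'_1β'_2γ'_2 = 0, α_2β_1γ_1 + α'_2β'_1γ'_1 = 0, α_2β_1γ_2 + α'_2β'_1γ'_2 = 0, α_2β_2γ_1 + α'_2β'_2γ'_1 = 0, α_2β_2γ_2 + α'_2β'_2γ'_2 = 1. Then either α_1β_1γ_1 = α'_2β'_2γ'_2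 = 1 and α_2 = β_2 = γ_2 = α'_1 = β'_1 = γ'_1 = 0, or α_2β_2γ_2 = α'_1β'_1γ'_1 = 1 and α_1 = β_1 = γ_1 = α'_2 = β'_2 = γ'_2 = 0. -/
/-!
The equations say that the tensor `e₁ ⊗ e₁ ⊗ e₁ + e₂ ⊗ e₂ ⊗ e₂` equals
`α ⊗ β ⊗ γ + α' ⊗ β' ⊗ γ'`. With `B = (β β')` and `C = (γ γ')` as `2 × 2` matrices, slicing
along the first factor gives `B * diag(αᵢ, αᵢ') * Cᵀ = Eᵢᵢ` for `i = 1, 2`. The two slices add up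
to the identity, so `det B * det C ≠ 0`; each slice is singular, so `α₁ * α₁' = 0`.
If `α₁' = 0`, the first slice `α₁ β γᵀ = E₁₁` forces `β₂ = γ₂ = 0`, and the second slice then gives
the remaining equalities. The case `α₁ = 0` is the same with the roles of the two
summands exchanged.
-/

/-- The case `α₁' = 0`, with one variable `xᵢ, yᵢ, zᵢ` (resp. `uᵢ, vᵢ, wᵢ`) per coordinate of the
factors of the first (resp. second) rank-one summand. -/
lemma sparse_of_eq_zero {K : Type*} [Field K]
    {x₁ x₂ u₁ u₂ y₁ y₂ v₁ v₂ z₁ z₂ w₁ w₂ : K}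
    (h₁ : x₁ * y₁ * z₁ + u₁ * v₁ * w₁ = 1)
    (h₂ : x₁ * y₁ * z₂ + u₁ * v₁ * w₂ = 0)
    (h₃ : x₁ * y₂ * z₁ + u₁ * v₂ * w₁ = 0)
    (h₅ : x₂ * y₁ * z₁ + u₂ * v₁ * w₁ = 0)
    (h₆ : x₂ * y₁ * z₂ + u₂ * v₁ * w₂ = 0)
    (h₇ : x₂ * y₂ * z₁ + u₂ * v₂ * w₁ = 0)
    (h₈ : x₂ * y₂ * z₂ + u₂ * v₂ * w₂ = 1) (hu : u₁ = 0) :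
    x₁ * y₁ * z₁ = 1 ∧ u₂ * v₂ * w₂ = 1 ∧
      x₂ = 0 ∧ y₂ = 0 ∧ z₂ = 0 ∧ u₁ = 0 ∧ v₁ = 0 ∧ w₁ = 0 := by
  subst hu
  simp only [zero_mul, add_zero] at h₁ h₂ h₃
  have hz : z₂ = 0 := by linear_combination z₁ * h₂ - z₂ * h₁
  have hy : y₂ = 0 := by linear_combination y₁ * h₃ - y₂ * h₁
  subst hz hy
  simp only [mul_zero, zero_mul, zero_add] at h₆ h₇ h₈
  have hv : v₁ = 0 := by linear_combination v₂ * h₆ - v₁ * h₈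
  have hw : w₁ = 0 := by linear_combination w₂ * h₇ - w₁ * h₈
  subst hv hw
  have hx : x₂ = 0 := by linear_combination x₁ * h₅ - x₂ * h₁
  exact ⟨h₁, h₈, hx, rfl, rfl, rfl, rfl, rfl⟩

/-- The system of eight cubic equations from the proof of Lemma 1 forces one of the
two sparse solution patterns. -/
theorem stmt15 (K : Type*) [Field K]
    (α₁ α₂ α₁' α₂' β₁ β₂ β₁' β₂' γ₁ γ₂ γ₁' γ₂' : K)
    (h₁ : α₁ * β₁ * γ₁ + α₁' * β₁' * γ₁' = 1)
    (h₂ : α₁ * β₁ * γ₂ + α₁' * β₁' * γ₂' = 0)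
    (h₃ : α₁ * β₂ * γ₁ + α₁' * β₂' * γ₁' = 0)
    (h₄ : α₁ * β₂ * γ₂ + α₁' * β₂' * γ₂' = 0)
    (h₅ : α₂ * β₁ * γ₁ + α₂' * β₁' * γ₁' = 0)
    (h₆ : α₂ * β₁ * γ₂ + α₂' * β₁' * γ₂' = 0)
    (h₇ : α₂ * β₂ * γ₁ + α₂' * β₂' * γ₁' = 0)
    (h₈ : α₂ * β₂ * γ₂ + α₂' * β₂' * γ₂' = 1) :
    (α₁ * β₁ * γ₁ = 1 ∧ α₂' * β₂' * γ₂' = 1 ∧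
      α₂ = 0 ∧ β₂ = 0 ∧ γ₂ = 0 ∧ α₁' = 0 ∧ β₁' = 0 ∧ γ₁' = 0) ∨
    (α₂ * β₂ * γ₂ = 1 ∧ α₁' * β₁' * γ₁' = 1 ∧
      α₁ = 0 ∧ β₁ = 0 ∧ γ₁ = 0 ∧ α₂' = 0 ∧ β₂' = 0 ∧ γ₂' = 0) := by
  -- `d = det B * det C`
  set d := (β₁ * β₂' - β₁' * β₂) * (γ₁ * γ₂' - γ₁' * γ₂) with hd
  -- the determinant of the first slice
  have s₁ : α₁ * α₁' * d = 0 := by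
    have : α₁ * α₁' * d = (α₁ * β₁ * γ₁ + α₁' * β₁' * γ₁') * (α₁ * β₂ * γ₂ + α₁' * β₂' * γ₂') -
        (α₁ * β₁ * γ₂ + α₁' * β₁' * γ₂') * (α₁ * β₂ * γ₁ + α₁' * β₂' * γ₁') := by
      rw [hd]; ring
    rw [this, h₁, h₂, h₃, h₄]; ring
  -- the determinant of the sum of the two slices
  have s₂ : (α₁ + α₂) * (α₁' + α₂') * d = 1 := by
    have : (α₁ + α₂) * (α₁' + α₂') * d =
        ((α₁ * β₁ * γ₁ + α₁' * β₁' * γ₁') + (α₂ * β₁ * γ₁ + α₂' * β₁' * γ₁')) *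
          ((α₁ * β₂ * γ₂ + α₁' * β₂' * γ₂') + (α₂ * β₂ * γ₂ + α₂' * β₂' * γ₂')) -
        ((α₁ * β₁ * γ₂ + α₁' * β₁' * γ₂') + (α₂ * β₁ * γ₂ + α₂' * β₁' * γ₂')) *
          ((α₁ * β₂ * γ₁ + α₁' * β₂' * γ₁') + (α₂ * β₂ * γ₁ + α₂' * β₂' * γ₁')) := by
      rw [hd]; ring
    rw [this, h₁, h₂, h₃, h₄, h₅, h₆, h₇, h₈]; ring
  have h : α₁ * α₁' = 0 :=
    (mul_eq_zero.mp s₁).resolve_right (right_ne_zero_of_mul_eq_one s₂)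
  rcases mul_eq_zero.mp h with h0 | h0
  · right
    rw [add_comm] at h₁ h₂ h₃ h₅ h₆ h₇ h₈
    obtain ⟨p, q, a, b, c, e, f, g⟩ := sparse_of_eq_zero h₁ h₂ h₃ h₅ h₆ h₇ h₈ h0
    exact ⟨q, p, e, f, g, a, b, c⟩
  · exact .inl (sparse_of_eq_zero h₁ h₂ h₃ h₅ h₆ h₇ h₈ h0)
end
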